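/- For Q = (1/d²) Σ_{P ∈ 𝒫_n} P^{⊗4} on (ℂ^d)^{⊗4} with d = 2^n, one has Σ_{ρ ∈ S_4} Tr[Q T_ρ] = 4(d+1)(d+2), and consequently Tr[Q Π_4^{sym}] / Tr[Π_4^{sym}] = 4 / (d(d+3)). -/

import Mathlib

open Matrix BigOperators
open scoped Classical

/-- Tensor power of a matrix: `O^{⊗k}` acting on `ι^k`. -/
noncomputable def tensorPow {ι : Type} [Fintype ι] (O : Matrix ι ι ℂ) (k : ℕ) :
    Matrix (Fin k → ι) (Fin k → ι) ℂ :=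
  fun x y => ∏ i, O (x i) (y i)

/-- Permutation operator `T_ρ` on `H^{⊗k}`: `T_ρ (v_1 ⊗ ⋯ ⊗ v_k) = v_{ρ⁻¹(1)} ⊗ ⋯`. -/
noncomputable def permOp (ι : Type) [Fintype ι] {k : ℕ} (ρ : Equiv.Perm (Fin k)) :
    Matrix (Fin k → ι) (Fin k → ι) ℂ :=
  fun x y => if x = y ∘ ρ.symm then 1 else 0

/-- Unnormalized projector onto symmetric subspace. -/
noncomputable def symProj (ι : Type) [Fintype ι] (k : ℕ) :
    Matrix (Fin k → ι) (Fin k → ι) ℂ :=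
  ∑ ρ : Equiv.Perm (Fin k), permOp ι ρ

/-- Single-qubit Pauli matrices I, X, Y, Z. -/
noncomputable def pauli : Fin 4 → Matrix (Fin 2) (Fin 2) ℂ
  | 0 => 1
  | 1 => !![0, 1; 1, 0]
  | 2 => !![0, -Complex.I; Complex.I, 0]
  | 3 => !![1, 0; 0, -1]

/-- Pauli string `P_{s 0} ⊗ ⋯ ⊗ P_{s (n-1)}` on `n` qubits. -/
noncomputable def pauliString {n : ℕ} (s : Fin n → Fin 4) :
    Matrix (Fin n → Fin 2) (Fin n → Fin 2) ℂ :=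
  fun x y => ∏ i, pauli (s i) (x i) (y i)

/-- `Q = (1/d²) Σ_P P^{⊗4}` on `(ℂ^d)^{⊗4}`, `d = 2^n`. -/
noncomputable def Qop (n : ℕ) :
    Matrix (Fin 4 → (Fin n → Fin 2)) (Fin 4 → (Fin n → Fin 2)) ℂ :=
  (((2 : ℂ) ^ n) ^ 2)⁻¹ • ∑ s : Fin n → Fin 4, tensorPow (pauliString s) 4

/-!
The trace of `O^{⊗k} T_ρ` factors over the cycles of `ρ`: a cycle of length `l` contributes
`Tr (O^l)`. A Pauli string squares to `1` and is traceless unless it is the identity, so the cycle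
types of `S_4` split in two. If all cycles have even length, every one of the `4^n = d²` strings
contributes `d` per cycle, cancelling the factor `1/d²` in `Q`. If some cycle has odd length, only
the identity string survives. Counting the cycle types gives
`d⁴/d² + 6 d³/d² + 3 d² + 8 d²/d² + 6 d = 4 (d + 1) (d + 2)`, while `O = 1` gives
`Tr Π_4^{sym} = d⁴ + 6 d³ + 11 d² + 6 d = d (d + 1) (d + 2) (d + 3)`.
-/

open Finset Equiv Equiv.Perm

theorem cycleOf_eq_iff_mem_support {α : Type*} [Fintype α] [DecidableEq α] {σ c : Perm α}
    (hc : c ∈ σ.cycleFactorsFinset) {a : α} : σ.cycleOf a = c ↔ a ∈ c.support := by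
  refine ⟨?_, fun ha => (cycle_is_cycleOf ha hc).symm⟩
  rintro rfl
  exact mem_support_cycleOf_iff.2 ⟨.rfl, cycleOf_mem_cycleFactorsFinset_iff.1 hc⟩

section PermContraction

variable {R : Type*} [CommSemiring R] {ι : Type*} [Fintype ι]
  {α : Type*} [Fintype α] [DecidableEq α]

/-- The full contraction `∑_x ∏_a O_{x_a, x_{σ a}}` of one copy of `O` for each point of `α`, the
column index at `a` being identified with the row index at `σ a`. In terms of tensor powers it is
the trace of `O^{⊗α}` composed with the operator permuting the factors by `σ⁻¹`. -/
def permContraction (O : Matrix ι ι R) (σ : Perm α) : R :=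
  ∑ x : α → ι, ∏ a, O (x a) (x (σ a))

theorem permContraction_one (O : Matrix ι ι R) :
    permContraction O (1 : Perm α) = O.trace ^ Fintype.card α := by
  simp_rw [permContraction, one_apply, ← Fintype.prod_sum fun (_ : α) i => O i i, prod_const,
    card_univ, trace, Matrix.diag]

theorem permContraction_of_isEmpty [IsEmpty α] (O : Matrix ι ι R) (σ : Perm α) :
    permContraction O σ = 1 := by
  simp [permContraction]

theorem permContraction_eq_of_semiconj {β : Type*} [Fintype β] [DecidableEq β]
    (O : Matrix ι ι R) {σ : Perm α} {τ : Perm β} (e : α ≃ β) (h : Function.Semiconj e σ τ) :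
    permContraction O σ = permContraction O τ := by
  refine Fintype.sum_equiv (e.arrowCongr (.refl ι)) _ _ fun x =>
    Fintype.prod_equiv e _ _ fun a => ?_
  simp [← h a]

theorem pow_succ_apply_eq_sum_prod [DecidableEq ι] (O : Matrix ι ι R) (n : ℕ) (i j : ι) :
    (O ^ (n + 1)) i j =
      ∑ x : Fin n → ι, ∏ k : Fin (n + 1),
        O (Fin.cons (α := fun _ => ι) i x k) (Fin.snoc (α := fun _ => ι) x j k) := by
  induction n generalizing i with
  | zero => simp [Fin.snoc]
  | succ n ih =>
    rw [pow_succ', Matrix.mul_apply, ← (Fin.consEquiv fun _ => ι).sum_comp, Fintype.sum_prod_type]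
    refine sum_congr rfl fun l _ => ?_
    rw [ih, mul_sum]
    refine sum_congr rfl fun x _ => ?_
    change _ = ∏ k, O (Fin.cons (α := fun _ => ι) i (Fin.cons l x) k)
      (Fin.snoc (α := fun _ => ι) (Fin.cons l x) j k)
    rw [← Fin.cons_snoc_eq_snoc_cons, Fin.prod_univ_succ (n := n + 1)]
    simp only [Fin.cons_zero, Fin.cons_succ]

theorem permContraction_finRotate [DecidableEq ι] (O : Matrix ι ι R) (n : ℕ) :
    permContraction O (finRotate (n + 1)) = (O ^ (n + 1)).trace := by
  simp_rw [permContraction, trace, Matrix.diag, pow_succ_apply_eq_sum_prod, Fin.snoc_eq_cons_rotate]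
  rw [← (Fin.consEquiv fun _ => ι).sum_comp, Fintype.sum_prod_type]
  rfl

theorem permContraction_of_isCycleOn [DecidableEq ι] [Nonempty α] (O : Matrix ι ι R)
    {σ : Perm α} (hσ : σ.IsCycleOn (univ : Finset α)) :
    permContraction O σ = (O ^ Fintype.card α).trace := by
  obtain ⟨n, hn⟩ := Nat.exists_eq_add_one.2 (Fintype.card_pos (α := α))
  have a : α := Classical.arbitrary α
  let orbit (k : Fin (n + 1)) : α := (σ ^ (k : ℕ)) a
  have orbit_surjective : Function.Surjective orbit := fun b => by
    obtain ⟨k, hk, rfl⟩ := hσ.exists_pow_eq (mem_univ a) (mem_univ b)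
    exact ⟨⟨k, by rwa [card_univ, hn] at hk⟩, rfl⟩
  have orbit_bijective : Function.Bijective orbit :=
    (Fintype.bijective_iff_surjective_and_card _).2 ⟨orbit_surjective, by simp [hn]⟩
  have orbit_semiconj : Function.Semiconj orbit (finRotate (n + 1)) σ := fun k => by
    rw [← mul_apply, ← pow_succ', hσ.pow_apply_eq_pow_apply (mem_univ a), card_univ, hn]
    simp [Fin.val_add, Nat.ModEq]
  rw [← permContraction_eq_of_semiconj O (.ofBijective orbit orbit_bijective) orbit_semiconj,
    permContraction_finRotate, hn]

theorem permContraction_eq_prod_fiber {κ : Type*} [Fintype κ] [DecidableEq κ] (O : Matrix ι ι R)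
    {σ : Perm α} {f : α → κ} (hf : ∀ a, f (σ a) = f a) :
    permContraction O σ =
      ∏ c, permContraction O (σ.subtypePerm (p := fun a => f a = c) fun a => by rw [hf]) := by
  simp_rw [permContraction, Fintype.prod_sum]
  refine Fintype.sum_equiv
    (((Equiv.sigmaFiberEquiv f).arrowCongr (.refl ι)).symm.trans (Equiv.piCurry fun _ _ => ι))
    _ _ fun x => ?_
  rw [← (Equiv.sigmaFiberEquiv f).prod_comp, Fintype.prod_sigma]
  rfl

theorem permContraction_subtypePerm_of_fixed (O : Matrix ι ι R) {σ : Perm α} {p : α → Prop}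
    [DecidablePred p] {h : ∀ a, p (σ a) ↔ p a} (hp : ∀ a, p a → σ a = a) :
    permContraction O (σ.subtypePerm h) = O.trace ^ Fintype.card (Subtype p) := by
  have subtypePerm_eq_one : σ.subtypePerm h = 1 := Perm.ext fun a => Subtype.ext (hp a a.2)
  rw [subtypePerm_eq_one, permContraction_one]

theorem permContraction_subtypePerm_of_sameCycle [DecidableEq ι] (O : Matrix ι ι R) {σ : Perm α}
    {p : α → Prop} [DecidablePred p] [Nonempty (Subtype p)] {h : ∀ a, p (σ a) ↔ p a}
    (hp : ∀ a b, p a → p b → σ.SameCycle a b) :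
    permContraction O (σ.subtypePerm h) = (O ^ Fintype.card (Subtype p)).trace := by
  refine permContraction_of_isCycleOn O ⟨?_, ?_⟩
  · simp
  · rintro ⟨a, ha⟩ - ⟨b, hb⟩ -
    exact sameCycle_subtypePerm.2 (hp a b ha hb)

theorem permContraction_subtypePerm_cycleOf_eq [DecidableEq ι] (O : Matrix ι ι R) {σ c : Perm α}
    (hc : c ∈ σ.cycleFactorsFinset) {h : ∀ a, σ.cycleOf (σ a) = c ↔ σ.cycleOf a = c} :
    permContraction O (σ.subtypePerm (p := fun a => σ.cycleOf a = c) h) =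
      (O ^ #c.support).trace := by
  have : Nonempty {a // σ.cycleOf a = c} :=
    let ⟨a, ha⟩ := (mem_cycleFactorsFinset_iff.1 hc).1.nonempty_support
    ⟨a, (cycleOf_eq_iff_mem_support hc).2 ha⟩
  rw [permContraction_subtypePerm_of_sameCycle O ?_,
    Fintype.card_of_subtype c.support fun a => (cycleOf_eq_iff_mem_support hc).symm]
  rintro a b rfl hb
  exact (mem_support_cycleOf_iff.1 <| (cycleOf_eq_iff_mem_support hc).1 hb).1

theorem permContraction_eq_prod_partition [DecidableEq ι] (O : Matrix ι ι R) (σ : Perm α) :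
    permContraction O σ = (σ.partition.parts.map fun l => (O ^ l).trace).prod := by
  have cycleOf_apply_eq_iff (c : Perm α) (a : α) : σ.cycleOf (σ a) = c ↔ σ.cycleOf a = c := by
    rw [cycleOf_self_apply]
  -- The fibers of `σ.cycleOf` are the supports of the cycles of `σ` and its set of fixed points.
  let fiber (c : Perm α) : Perm {a // σ.cycleOf a = c} := σ.subtypePerm (cycleOf_apply_eq_iff c)
  have fiber_one : permContraction O (fiber 1) = O.trace ^ (Fintype.card α - #σ.support) := by
    rw [permContraction_subtypePerm_of_fixed O fun a => (cycleOf_eq_one_iff σ).1,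
      Fintype.card_of_subtype σ.supportᶜ (by simp [cycleOf_eq_one_iff]), card_compl]
  have fiber_empty (c : Perm α) (hc : c ∉ insert 1 σ.cycleFactorsFinset) :
      permContraction O (fiber c) = 1 := by
    have : IsEmpty {a // σ.cycleOf a = c} := ⟨by
      rintro ⟨a, rfl⟩
      simp [cycleOf_mem_cycleFactorsFinset_iff] at hc⟩
    exact permContraction_of_isEmpty O _
  calc permContraction O σ
      = ∏ c, permContraction O (fiber c) := permContraction_eq_prod_fiber O σ.cycleOf_self_apply
    _ = ∏ c ∈ insert 1 σ.cycleFactorsFinset, permContraction O (fiber c) :=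
      (prod_subset (subset_univ _) fun c _ => fiber_empty c).symm
    _ = O.trace ^ (Fintype.card α - #σ.support) *
          ∏ c ∈ σ.cycleFactorsFinset, (O ^ #c.support).trace := by
      rw [prod_insert fun h => (mem_cycleFactorsFinset_iff.1 h).1.ne_one rfl, fiber_one,
        prod_congr rfl fun c hc => permContraction_subtypePerm_cycleOf_eq O hc]
    _ = (σ.partition.parts.map fun l => (O ^ l).trace).prod := by
      rw [parts_partition, cycleType_def]
      simp [mul_comm]

end PermContraction

section PermOp

variable {ι : Type} [Fintype ι] {k : ℕ}

theorem trace_mul_permOp (A : Matrix (Fin k → ι) (Fin k → ι) ℂ) (ρ : Perm (Fin k)) :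
    (A * permOp ι ρ).trace = ∑ x, A x (x ∘ ⇑ρ⁻¹) := by
  simp [trace, Matrix.mul_apply, permOp]

theorem trace_tensorPow_mul_permOp [DecidableEq ι] (O : Matrix ι ι ℂ) (ρ : Perm (Fin k)) :
    (tensorPow O k * permOp ι ρ).trace = (ρ.partition.parts.map fun l => (O ^ l).trace).prod := by
  calc (tensorPow O k * permOp ι ρ).trace = permContraction O ρ⁻¹ := trace_mul_permOp _ _
    _ = (ρ.partition.parts.map fun l => (O ^ l).trace).prod := by
      rw [permContraction_eq_prod_partition, parts_partition, cycleType_inv, support_inv,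
        parts_partition]

theorem tensorPow_one [DecidableEq ι] : tensorPow (1 : Matrix ι ι ℂ) k = 1 := by
  ext x y
  simp [tensorPow, Matrix.one_apply, Fintype.prod_boole, funext_iff]

theorem trace_permOp (ρ : Perm (Fin k)) :
    (permOp ι ρ).trace = (Fintype.card ι : ℂ) ^ ρ.partition.parts.card := by
  simpa [tensorPow_one] using trace_tensorPow_mul_permOp (1 : Matrix ι ι ℂ) ρ

end PermOp

theorem sum_perm_fin_four {M : Type*} [AddCommMonoid M] (g : Multiset ℕ → M) :
    ∑ ρ : Perm (Fin 4), g ρ.partition.parts =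
      g {1, 1, 1, 1} + 6 • g {2, 1, 1} + 3 • g {2, 2} + 8 • g {3, 1} + 6 • g {4} := by
  have map_parts_univ : (univ.val.map fun ρ : Perm (Fin 4) => ρ.partition.parts) =
      {{1, 1, 1, 1}} + .replicate 6 {2, 1, 1} + .replicate 3 {2, 2} + .replicate 8 {3, 1} +
        .replicate 6 {4} := by
    decide +kernel
  calc ∑ ρ : Perm (Fin 4), g ρ.partition.parts
      = ((univ.val.map fun ρ : Perm (Fin 4) => ρ.partition.parts).map g).sum := by
        rw [Multiset.map_map]; rfl
    _ = _ := by
        simp only [map_parts_univ, Multiset.map_add, Multiset.map_singleton,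
          Multiset.map_replicate, Multiset.sum_add, Multiset.sum_singleton, Multiset.sum_replicate]

theorem trace_symProj_four (ι : Type) [Fintype ι] :
    (symProj ι 4).trace = (Fintype.card ι : ℂ) * (Fintype.card ι + 1) * (Fintype.card ι + 2) *
      (Fintype.card ι + 3) := by
  simp_rw [symProj, trace_sum, trace_permOp]
  rw [sum_perm_fin_four fun parts => (Fintype.card ι : ℂ) ^ parts.card]
  simp only [Multiset.insert_eq_cons, Multiset.card_cons, Multiset.card_singleton, nsmul_eq_mul]
  ring

section PauliString

variable {n : ℕ}

theorem pauli_mul_self (a : Fin 4) : pauli a * pauli a = 1 := by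
  fin_cases a <;> simp [pauli, Matrix.one_fin_two]

theorem trace_pauli (a : Fin 4) : (pauli a).trace = if a = 0 then 2 else 0 := by
  fin_cases a <;> simp [pauli, trace_fin_two]

theorem pauliString_mul_self (s : Fin n → Fin 4) : pauliString s * pauliString s = 1 := by
  ext x y
  calc (pauliString s * pauliString s) x y
      = ∑ z : Fin n → Fin 2, ∏ i, pauli (s i) (x i) (z i) * pauli (s i) (z i) (y i) := by
        simp_rw [Matrix.mul_apply, pauliString, prod_mul_distrib]
    _ = ∏ i, (pauli (s i) * pauli (s i)) (x i) (y i) := by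
        simp_rw [Matrix.mul_apply, Fintype.prod_sum]
    _ = (1 : Matrix (Fin n → Fin 2) (Fin n → Fin 2) ℂ) x y := by
        simp [pauli_mul_self, Matrix.one_apply, Fintype.prod_boole, funext_iff]

theorem trace_pauliString (s : Fin n → Fin 4) :
    (pauliString s).trace = if s = 0 then 2 ^ n else 0 := by
  calc (pauliString s).trace = ∏ i, (pauli (s i)).trace := by
        simp_rw [trace, Matrix.diag, Fintype.prod_sum, pauliString]
    _ = if s = 0 then 2 ^ n else 0 := by
        simp [trace_pauli, Fintype.prod_ite_zero, funext_iff]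

theorem trace_pauliString_pow (s : Fin n → Fin 4) (l : ℕ) :
    (pauliString s ^ l).trace = if s = 0 ∨ Even l then 2 ^ n else 0 := by
  obtain ⟨m, rfl | rfl⟩ := l.even_or_odd'
  · simp [pow_mul, sq, pauliString_mul_self]
  · simp [pow_succ, pow_mul, pauliString_mul_self, trace_pauliString]

theorem trace_tensorPow_pauliString_mul_permOp (s : Fin n → Fin 4) {k : ℕ} (ρ : Perm (Fin k)) :
    (tensorPow (pauliString s) k * permOp (Fin n → Fin 2) ρ).trace =
      if s = 0 ∨ ∀ l ∈ ρ.partition.parts, Even l then (2 ^ n) ^ ρ.partition.parts.card else 0 := by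
  simp_rw [trace_tensorPow_mul_permOp, trace_pauliString_pow]
  split_ifs with h
  · rw [Multiset.map_congr rfl fun l hl => if_pos (h.imp_right fun h => h l hl)]
    simp
  · push Not at h
    obtain ⟨hs, l, hl, hl_odd⟩ := h
    exact Multiset.prod_eq_zero (Multiset.mem_map.2 ⟨l, hl, by simp [hs, hl_odd]⟩)

theorem trace_Qop_mul_permOp (ρ : Perm (Fin 4)) :
    (Qop n * permOp (Fin n → Fin 2) ρ).trace =
      if ∀ l ∈ ρ.partition.parts, Even l then (2 ^ n) ^ ρ.partition.parts.card
      else (2 ^ n) ^ ρ.partition.parts.card / (2 ^ n) ^ 2 := by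
  simp_rw [Qop, Matrix.smul_mul, Matrix.sum_mul, trace_smul, trace_sum,
    trace_tensorPow_pauliString_mul_permOp]
  split_ifs with h
  · have four_pow : (4 : ℂ) ^ n = (2 ^ n) ^ 2 := by
      rw [pow_right_comm]; norm_num
    simp [eq_true h, four_pow]
  · simp [h, div_eq_inv_mul]

end PauliString

theorem sum_trace_Qop_mul_permOp (n : ℕ) :
    ∑ ρ : Perm (Fin 4), (Qop n * permOp (Fin n → Fin 2) ρ).trace =
      4 * ((2 : ℂ) ^ n + 1) * ((2 : ℂ) ^ n + 2) := by
  simp_rw [trace_Qop_mul_permOp]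
  set d : ℂ := 2 ^ n
  have hd : d ≠ 0 := pow_ne_zero n two_ne_zero
  calc ∑ ρ : Perm (Fin 4), (if ∀ l ∈ ρ.partition.parts, Even l then d ^ ρ.partition.parts.card
          else d ^ ρ.partition.parts.card / d ^ 2)
      = d ^ 4 / d ^ 2 + 6 * (d ^ 3 / d ^ 2) + 3 * d ^ 2 + 8 * (d ^ 2 / d ^ 2) + 6 * d := by
        rw [sum_perm_fin_four fun parts =>
          if ∀ l ∈ parts, Even l then d ^ parts.card else d ^ parts.card / d ^ 2]
        simp [Nat.even_iff]
    _ = 4 * (d + 1) * (d + 2) := by field_simp; ring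

/-- `Σ_{ρ ∈ S_4} Tr[Q T_ρ] = 4(d+1)(d+2)` and
`Tr[Q Π_4^{sym}]/Tr[Π_4^{sym}] = 4/(d(d+3))` with `d = 2^n`. -/
theorem sum_trace_Qop_permOp (n : ℕ) :
    (∑ ρ : Equiv.Perm (Fin 4),
        (Qop n * permOp (Fin n → Fin 2) ρ).trace)
      = 4 * ((2 : ℂ) ^ n + 1) * ((2 : ℂ) ^ n + 2) ∧
    (Qop n * symProj (Fin n → Fin 2) 4).trace / (symProj (Fin n → Fin 2) 4).trace
      = 4 / ((2 : ℂ) ^ n * ((2 : ℂ) ^ n + 3)) := by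
  refine ⟨sum_trace_Qop_mul_permOp n, ?_⟩
  have hd_add_one : (2 : ℂ) ^ n + 1 ≠ 0 := by
    simpa using Nat.cast_add_one_ne_zero (R := ℂ) (2 ^ n)
  have hd_add_two : (2 : ℂ) ^ n + 2 ≠ 0 := by
    simpa [add_assoc, one_add_one_eq_two] using Nat.cast_add_one_ne_zero (R := ℂ) (2 ^ n + 1)
  have trace_symProj : (symProj (Fin n → Fin 2) 4).trace =
      (2 : ℂ) ^ n * (2 ^ n + 1) * (2 ^ n + 2) * (2 ^ n + 3) := by
    simp [trace_symProj_four]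
  have trace_Qop_mul_symProj : (Qop n * symProj (Fin n → Fin 2) 4).trace =
      4 * ((2 : ℂ) ^ n + 1) * (2 ^ n + 2) := by
    rw [symProj, Matrix.mul_sum, trace_sum, sum_trace_Qop_mul_permOp]
  rw [trace_Qop_mul_symProj, trace_symProj]
  field_simp
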